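/- Let k be a field of characteristic ≠ 2 and n ≥ 1. Then the tame subgroup T_n(k) of GA_n(k) is contained in GLIN_n(k), the subgroup generated by the linearizable automorphisms. -/

import Mathlib

open MvPolynomial

/-- An automorphism of `k[X_1,…,X_n]` is linear if it maps every variable to a homogeneous
polynomial of degree 1. -/
def IsLinearAut (k : Type*) [Field k] (n : ℕ)
    (φ : MvPolynomial (Fin n) k ≃ₐ[k] MvPolynomial (Fin n) k) : Prop :=
  ∀ i, (φ (X i)).IsHomogeneous 1

/-- An automorphism is affine if it maps every variable to a polynomial of degree `≤ 1`. -/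
def IsAffineAut (k : Type*) [Field k] (n : ℕ)
    (φ : MvPolynomial (Fin n) k ≃ₐ[k] MvPolynomial (Fin n) k) : Prop :=
  ∀ i, (φ (X i)).totalDegree ≤ 1

/-- An automorphism is elementary if it has the form `X_i ↦ X_i + f` with `f` not involving
`X_i`, fixing all other variables. -/
def IsElementaryAut (k : Type*) [Field k] (n : ℕ)
    (φ : MvPolynomial (Fin n) k ≃ₐ[k] MvPolynomial (Fin n) k) : Prop :=
  ∃ (i : Fin n) (f : MvPolynomial (Fin n) k),
    f ∈ MvPolynomial.supported k {j : Fin n | j ≠ i} ∧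
    φ (X i) = X i + f ∧ ∀ j, j ≠ i → φ (X j) = X j

/-- An automorphism is linearizable if it is conjugate in the automorphism group to a
linear automorphism. -/
def IsLinearizableAut (k : Type*) [Field k] (n : ℕ)
    (φ : MvPolynomial (Fin n) k ≃ₐ[k] MvPolynomial (Fin n) k) : Prop :=
  ∃ (σ M : MvPolynomial (Fin n) k ≃ₐ[k] MvPolynomial (Fin n) k),
    IsLinearAut k n M ∧ ∀ p, φ p = σ (M (σ.symm p))

/-- `T_n(k)`: the tame subgroup of `GA_n(k)`, generated by affine and elementary
automorphisms. -/
noncomputable def TameSubgroup (k : Type*) [Field k] (n : ℕ) :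
    Subgroup (MvPolynomial (Fin n) k ≃ₐ[k] MvPolynomial (Fin n) k) :=
  Subgroup.closure {φ | IsAffineAut k n φ ∨ IsElementaryAut k n φ}

/-- `GLIN_n(k)`: the subgroup of `GA_n(k)` generated by the linearizable automorphisms. -/
noncomputable def GLIN (k : Type*) [Field k] (n : ℕ) :
    Subgroup (MvPolynomial (Fin n) k ≃ₐ[k] MvPolynomial (Fin n) k) :=
  Subgroup.closure {φ | IsLinearizableAut k n φ}

/-!
Fix `S ⊆ σ` and let a shear add to each `X j`, `j ∈ S`, a polynomial `f j` in the variables outside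
`S`. Elementary automorphisms are the shears with `S` a singleton, and translations are the shears
with `S = σ`. If `δ` scales the variables in `S` by a unit `u` and fixes the others, then
`⁅δ, shear (u • f)⁆ = shear ((1 - u) • f)`. Since `δ` is linear and the subgroup generated by the
linearizable automorphisms is normal, being the normal closure of the linear ones, it contains all
shears as soon as `k` has an element `u ≠ 0, 1`, and in characteristic `≠ 2` one may take `u = -1`.
An affine automorphism is linear up to a translation.
-/

section CommSemiring

variable {σ R : Type*} [CommSemiring R] {S : Set σ}

lemma algHom_eqOn_supported {A : Type*} [Semiring A] [Algebra R A] {φ ψ : MvPolynomial σ R →ₐ[R] A}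
    (h : ∀ j ∈ S, φ (X j) = ψ (X j)) : Set.EqOn φ ψ (supported R S) := by
  rw [supported_eq_adjoin_X, AlgHom.eqOn_adjoin_iff]
  rintro _ ⟨j, hj, rfl⟩
  exact h j hj

open Classical in
/-- The endomorphism underlying a shear, adding `f j` to each `X j` with `j ∈ S`; it is separate from
`shear` because the inverse of the latter is the endomorphism attached to `-f`. -/
noncomputable def shearHom (f : S → supported R Sᶜ) : MvPolynomial σ R →ₐ[R] MvPolynomial σ R :=
  aeval fun j => if h : j ∈ S then X j + (f ⟨j, h⟩ : MvPolynomial σ R) else X j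

lemma shearHom_X (f : S → supported R Sᶜ) (j : S) :
    shearHom f (X j) = X (j : σ) + (f j : MvPolynomial σ R) := by
  simp [shearHom]

lemma shearHom_X_of_notMem (f : S → supported R Sᶜ) {j : σ} (hj : j ∉ S) :
    shearHom f (X j) = X j := by
  simp [shearHom, hj]

lemma shearHom_apply_supported (f : S → supported R Sᶜ) (p : supported R Sᶜ) :
    shearHom f p = p :=
  algHom_eqOn_supported (ψ := AlgHom.id R _) (fun _ hj => shearHom_X_of_notMem f hj) p.2

lemma shearHom_zero : shearHom (0 : S → supported R Sᶜ) = AlgHom.id R _ := by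
  ext1 j
  by_cases hj : j ∈ S
  · simpa using shearHom_X (0 : S → supported R Sᶜ) ⟨j, hj⟩
  · exact shearHom_X_of_notMem 0 hj

lemma shearHom_comp (f g : S → supported R Sᶜ) :
    (shearHom f).comp (shearHom g) = shearHom (f + g) := by
  ext1 j
  rw [AlgHom.comp_apply]
  by_cases hj : j ∈ S
  · lift j to S using hj
    simp only [shearHom_X, map_add, shearHom_apply_supported, Pi.add_apply, Subalgebra.coe_add,
      add_assoc]
  · simp only [shearHom_X_of_notMem _ hj]

lemma algEquiv_ext_of_mem_of_notMem {φ ψ : MvPolynomial σ R ≃ₐ[R] MvPolynomial σ R}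
    (hS : ∀ j : S, φ (X j) = ψ (X j)) (hS' : ∀ j ∉ S, φ (X j) = ψ (X j)) : φ = ψ := by
  refine AlgEquiv.coe_toAlgHom_injective (MvPolynomial.algHom_ext fun j => ?_)
  by_cases hj : j ∈ S
  · exact hS ⟨j, hj⟩
  · exact hS' j hj

/-- The diagonal automorphism `X j ↦ c j • X j`, given by the torus element `c`. -/
noncomputable def diagonalAut (c : σ → Rˣ) : MvPolynomial σ R ≃ₐ[R] MvPolynomial σ R :=
  AlgEquiv.ofAlgHom (aeval fun j => c j • X j) (aeval fun j => (c j)⁻¹ • X j)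
    (by ext1 j; simp [Units.smul_def, smul_smul]) (by ext1 j; simp [Units.smul_def, smul_smul])

lemma diagonalAut_X (c : σ → Rˣ) (j : σ) : diagonalAut c (X j) = c j • X j := by
  simp [diagonalAut]

lemma diagonalAut_apply_supported {c : σ → Rˣ} (hc : ∀ j ∉ S, c j = 1) (p : supported R Sᶜ) :
    diagonalAut c p = p :=
  algHom_eqOn_supported (φ := (diagonalAut c).toAlgHom) (ψ := AlgHom.id R _)
    (fun j hj => by simp [diagonalAut_X, hc j hj]) p.2

end CommSemiring

section CommRing

variable {σ R : Type*} [CommRing R] {S : Set σ}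

/-- The shear automorphism `X j ↦ X j + f j` for `j ∈ S`, `X j ↦ X j` for `j ∉ S`, where each
`f j` is a polynomial in the variables outside `S`. It is the common form of elementary
automorphisms (`S` a singleton) and translations (`S = Set.univ`). -/
noncomputable def shear (f : S → supported R Sᶜ) : MvPolynomial σ R ≃ₐ[R] MvPolynomial σ R :=
  AlgEquiv.ofAlgHom (shearHom f) (shearHom (-f))
    (by rw [shearHom_comp, add_neg_cancel, shearHom_zero])
    (by rw [shearHom_comp, neg_add_cancel, shearHom_zero])

lemma shear_X (f : S → supported R Sᶜ) (j : S) :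
    shear f (X j) = X (j : σ) + (f j : MvPolynomial σ R) :=
  shearHom_X f j

lemma shear_X_of_notMem (f : S → supported R Sᶜ) {j : σ} (hj : j ∉ S) : shear f (X j) = X j :=
  shearHom_X_of_notMem f hj

lemma shear_add (f g : S → supported R Sᶜ) : shear (f + g) = shear f * shear g :=
  AlgEquiv.ext fun p => DFunLike.congr_fun (shearHom_comp f g).symm p

lemma diagonalAut_mul_shear {c : σ → Rˣ} (hc : ∀ j ∉ S, c j = 1) (f : S → supported R Sᶜ) :
    diagonalAut c * shear (fun j : S => c j • f j) = shear f * diagonalAut c := by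
  refine algEquiv_ext_of_mem_of_notMem (S := S) (fun j => ?_) fun j hj => ?_
  · simp only [AlgEquiv.mul_apply, shear_X, diagonalAut_X, Units.smul_def, map_add, map_smul,
      Subalgebra.coe_smul, diagonalAut_apply_supported hc, smul_add]
  · simp [shear_X_of_notMem _ hj, diagonalAut_X, hc j hj]

open scoped commutatorElement in
lemma commutator_diagonalAut_shear {c : σ → Rˣ} (hc : ∀ j ∉ S, c j = 1)
    (f : S → supported R Sᶜ) :
    ⁅diagonalAut c, shear fun j : S => c j • f j⁆ = shear fun j : S => (1 - c j : R) • f j := by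
  have h_sum : (fun j : S => (1 - c j : R) • f j) + (fun j : S => c j • f j) = f := by
    ext1 j
    simp [sub_smul, Units.smul_def]
  rw [commutatorElement_def, diagonalAut_mul_shear hc, mul_inv_cancel_right,
    mul_inv_eq_iff_eq_mul, ← shear_add, h_sum]

lemma isHomogeneous_sub_constantCoeff {p : MvPolynomial σ R}
    (hp : p.totalDegree ≤ 1) : (p - C (constantCoeff p)).IsHomogeneous 1 := by
  classical
  intro d hd
  have hd₀ : d ≠ 0 := by
    rintro rfl
    simp [constantCoeff_eq] at hd
  have hdp : d ∈ p.support := by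
    rwa [coeff_sub, coeff_C, if_neg hd₀.symm, sub_zero, ← mem_support_iff] at hd
  have h_le : d.degree ≤ 1 := (le_totalDegree hdp).trans hp
  have h_ne : d.degree ≠ 0 := mt (Finsupp.degree_eq_zero_iff d).1 hd₀
  exact (DFunLike.congr_fun Finsupp.degree_eq_weight_one d).symm.trans
    (h_le.antisymm (Nat.one_le_iff_ne_zero.2 h_ne))

end CommRing

section GLIN

variable {k : Type*} [Field k] {n : ℕ}

lemma GLIN_eq_normalClosure (k : Type*) [Field k] (n : ℕ) :
    GLIN k n = Subgroup.normalClosure {φ | IsLinearAut k n φ} := by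
  refine congrArg Subgroup.closure (Set.ext fun φ => ?_)
  rw [Group.mem_conjugatesOfSet_iff]
  constructor
  · rintro ⟨σ, M, hM, hφ⟩
    exact ⟨M, hM, isConj_iff.2 ⟨σ, (AlgEquiv.ext hφ).symm⟩⟩
  · rintro ⟨M, hM, hMφ⟩
    obtain ⟨σ, rfl⟩ := isConj_iff.1 hMφ
    exact ⟨σ, M, hM, fun _ => rfl⟩

instance GLIN_normal : (GLIN k n).Normal :=
  GLIN_eq_normalClosure k n ▸ Subgroup.normalClosure_normal

lemma IsLinearAut.mem_GLIN {φ : MvPolynomial (Fin n) k ≃ₐ[k] MvPolynomial (Fin n) k}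
    (hφ : IsLinearAut k n φ) : φ ∈ GLIN k n :=
  GLIN_eq_normalClosure k n ▸ Subgroup.subset_normalClosure hφ

lemma isLinearAut_diagonalAut (c : Fin n → kˣ) : IsLinearAut k n (diagonalAut c) := by
  intro j
  rw [diagonalAut_X, Units.smul_def, smul_eq_C_mul]
  exact isHomogeneous_C_mul_X _ _

lemma shear_mem_GLIN {a : k} (ha₀ : a ≠ 0) (ha₁ : a ≠ 1) {S : Set (Fin n)}
    (f : S → supported k Sᶜ) : shear f ∈ GLIN k n := by
  let c : Fin n → kˣ := S.mulIndicator fun _ => Units.mk0 a ha₀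
  let g : S → supported k Sᶜ := fun j => (1 - a)⁻¹ • f j
  have hcS (j : S) : (c j : k) = a := by simp [c]
  have hgf : (fun j : S => (1 - c j : k) • g j) = f := by
    ext1 j
    simp only [g, hcS, smul_inv_smul₀ (sub_ne_zero.2 ha₁.symm)]
  rw [← hgf, ← commutator_diagonalAut_shear fun j hj => Set.mulIndicator_of_notMem hj _]
  exact Subgroup.commutator_le_left _ ⊤ <| Subgroup.commutator_mem_commutator
    (isLinearAut_diagonalAut c).mem_GLIN (Subgroup.mem_top _)

lemma IsElementaryAut.exists_eq_shear {φ : MvPolynomial (Fin n) k ≃ₐ[k] MvPolynomial (Fin n) k}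
    (hφ : IsElementaryAut k n φ) :
    ∃ (i : Fin n) (f : ({i} : Set (Fin n)) → supported k ({i} : Set (Fin n))ᶜ), φ = shear f := by
  obtain ⟨i, f, hf, hφi, hφj⟩ := hφ
  refine ⟨i, fun _ => ⟨f, hf⟩, algEquiv_ext_of_mem_of_notMem (S := {i}) ?_ fun j hj => ?_⟩
  · rintro ⟨_, rfl⟩
    rw [shear_X, hφi]
  · rw [shear_X_of_notMem _ hj, hφj j hj]

lemma IsAffineAut.exists_isLinearAut_mul_shear
    {φ : MvPolynomial (Fin n) k ≃ₐ[k] MvPolynomial (Fin n) k} (hφ : IsAffineAut k n φ) :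
    ∃ c : ↥(Set.univ : Set (Fin n)) → supported k (Set.univ : Set (Fin n))ᶜ,
      IsLinearAut k n (φ * shear c) := by
  refine ⟨fun j => algebraMap k _ (-constantCoeff (φ (X j))), fun j => ?_⟩
  rw [AlgEquiv.mul_apply, shear_X _ ⟨j, Set.mem_univ j⟩, Subalgebra.coe_algebraMap, map_add,
    AlgEquiv.commutes, algebraMap_eq, map_neg, ← sub_eq_add_neg]
  exact isHomogeneous_sub_constantCoeff (hφ j)

end GLIN

theorem nagata_stmt_17_general (k : Type*) [Field k] (hk : ∃ a : k, a ≠ 0 ∧ a ≠ 1) (n : ℕ) :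
    TameSubgroup k n ≤ GLIN k n := by
  obtain ⟨a, ha₀, ha₁⟩ := hk
  refine (Subgroup.closure_le _).2 ?_
  rintro φ (h_aff | h_elem)
  · obtain ⟨c, h_lin⟩ := h_aff.exists_isLinearAut_mul_shear
    exact (mul_mem_cancel_right (shear_mem_GLIN ha₀ ha₁ c)).1 h_lin.mem_GLIN
  · obtain ⟨i, f, rfl⟩ := h_elem.exists_eq_shear
    exact shear_mem_GLIN ha₀ ha₁ f

/-- Over a field of characteristic `≠ 2`, the tame subgroup `T_n(k)` is contained in
`GLIN_n(k)`. -/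
theorem nagata_stmt_17 (k : Type*) [Field k] (h2 : (2 : k) ≠ 0) (n : ℕ) (hn : 1 ≤ n) :
    TameSubgroup k n ≤ GLIN k n :=
  nagata_stmt_17_general k ⟨-1, neg_ne_zero.2 one_ne_zero, fun h =>
    h2 (by linear_combination -h)⟩ n
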